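/- arXiv:2307.16099 — 5 statements merged into one kernel-verified Lean document; each statement's English description precedes it below -/
import Mathlib

section
/- Let D ≥ 1 be an integer, γ > 0, and let S be a nonempty subset of [0,1]^D. Let C ⊆ ℝ^D be a finite γ-cover of [0,1]^D (in ℓ∞) of minimal cardinality, i.e. card(C) = N(γ, [0,1]^D), and let C_∂ = {c ∈ C : the closed ℓ∞-ball of radius γ around c intersects S}. Then N(γ, S) ≤ card(C_∂) ≤ 2^D · 4^D · N(γ/2, S). -/
/-- The covering number `N(r, U)`: the minimal cardinality of a finite `r`-cover of `U`
in the ℓ∞ (sup) norm on `ℝ^D` (here `Fin D → ℝ` carries the sup norm). -/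
noncomputable def coveringNumber (D : ℕ) (r : ℝ) (U : Set (Fin D → ℝ)) : ℕ :=
  sInf {n : ℕ | ∃ T : Finset (Fin D → ℝ), T.card = n ∧ U ⊆ ⋃ t ∈ T, {x | ‖x - t‖ ≤ r}}

/-! The part `C_∂` of a minimal `γ`-cover `C` of `K` is itself a minimal `γ`-cover of the union
of its own balls, since otherwise those balls could be replaced by fewer ones. Each of these balls
meets `S`, so every point of that union is within `2γ` of `S`, hence within `3γ` of the centers of a
`γ`-cover of `S`. In `ℝ^D` a sup-norm ball of radius `3γ` splits into `3^D` balls of radius `γ`, so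
`card C_∂ ≤ 3^D · N(γ, S)`. -/

open Metric hiding coveringNumber
open scoped NNReal

theorem encard_biUnion_le_mul {ι α : Type*} {T : Set ι} {P : ι → Set α} {M : ℕ∞}
    (hP : ∀ t ∈ T, (P t).encard ≤ M) : (⋃ t ∈ T, P t).encard ≤ M * T.encard := by
  rcases T.finite_or_infinite with hT | hT
  · lift T to Finset ι using hT
    calc (⋃ t ∈ T, P t).encard
      _ ≤ ∑ t ∈ T, (P t).encard := T.set_encard_biUnion_le P
      _ ≤ T.card • M := T.sum_le_card_nsmul _ _ hP
      _ = M * (T : Set ι).encard := by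
        rw [nsmul_eq_mul, mul_comm, Set.encard_coe_eq_coe_finsetCard]
  · rcases eq_or_ne M 0 with rfl | hM
    · simpa using hP
    · simp [hT.encard_eq, ENat.mul_top hM]

section PseudoEMetricSpace

variable {X : Type*} [PseudoEMetricSpace X] {ε δ : ℝ≥0} {M : ℕ∞} {A B C C' K S T T' : Set X}

theorem exists_isCover_encard_eq_externalCoveringNumber (ε : ℝ≥0) (A : Set X) :
    ∃ T, IsCover ε A T ∧ T.encard = externalCoveringNumber ε A := by
  have : Nonempty {T : Set X // IsCover ε A T} := ⟨A, .rfl⟩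
  obtain ⟨⟨T, hT⟩, hcard⟩ := ENat.exists_eq_iInf fun T : {T // IsCover ε A T} ↦ T.1.encard
  exact ⟨T, hT, hcard.trans iInf_subtype⟩

theorem isCover_union (hA : IsCover ε A T) (hB : IsCover ε B T') :
    IsCover ε (A ∪ B) (T ∪ T') := by
  rintro x (hx | hx)
  · exact hA.mono Set.subset_union_left hx
  · exact hB.mono Set.subset_union_right hx

theorem externalCoveringNumber_union_le (ε : ℝ≥0) (A B : Set X) :
    externalCoveringNumber ε (A ∪ B) ≤
      externalCoveringNumber ε A + externalCoveringNumber ε B := by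
  obtain ⟨T, hT, hTcard⟩ := exists_isCover_encard_eq_externalCoveringNumber ε A
  obtain ⟨T', hT', hTcard'⟩ := exists_isCover_encard_eq_externalCoveringNumber ε B
  rw [← hTcard, ← hTcard']
  exact (isCover_union hT hT').externalCoveringNumber_le_encard.trans
    (Set.encard_union_le T T')

theorem isCover_add_of_isCover_of_isCover (hBA : IsCover ε B A) (hAT : IsCover δ A T) :
    IsCover (ε + δ) B T := by
  intro x hx
  obtain ⟨y, hy, hxy : edist x y ≤ ε⟩ := hBA hx
  obtain ⟨t, ht, hyt : edist y t ≤ δ⟩ := hAT hy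
  refine ⟨t, ht, ?_⟩
  calc edist x t ≤ edist x y + edist y t := edist_triangle x y t
    _ ≤ ε + δ := add_le_add hxy hyt
    _ = ↑(ε + δ) := (ENNReal.coe_add ε δ).symm

theorem externalCoveringNumber_add_le_of_isCover (hBA : IsCover ε B A) :
    externalCoveringNumber (ε + δ) B ≤ externalCoveringNumber δ A :=
  le_iInf₂ fun _ hT ↦
    (isCover_add_of_isCover_of_isCover hBA hT).externalCoveringNumber_le_encard

theorem externalCoveringNumber_le_mul_of_closedEBall_le
    (hM : ∀ x : X, externalCoveringNumber ε (closedEBall x δ) ≤ M) :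
    externalCoveringNumber ε A ≤ M * externalCoveringNumber δ A := by
  obtain ⟨T, hT, hTcard⟩ := exists_isCover_encard_eq_externalCoveringNumber δ A
  choose P hP hPcard using fun x : X ↦
    exists_isCover_encard_eq_externalCoveringNumber ε (closedEBall x δ)
  have hcover : IsCover ε A (⋃ t ∈ T, P t) := by
    intro x hx
    obtain ⟨t, ht, hxt⟩ := hT hx
    exact (hP t).mono (Set.subset_biUnion_of_mem ht) hxt
  rw [← hTcard]
  exact hcover.externalCoveringNumber_le_encard.trans
    (encard_biUnion_le_mul fun t _ ↦ (hPcard t).trans_le (hM t))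

theorem encard_le_externalCoveringNumber_biUnion_closedEBall (hC : IsCover ε K C)
    (hmin : C.encard = externalCoveringNumber ε K) (hfin : C.Finite) (hsub : C' ⊆ C) :
    C'.encard ≤ externalCoveringNumber ε (⋃ c ∈ C', closedEBall c ε) := by
  obtain ⟨T, hT, hTcard⟩ :=
    exists_isCover_encard_eq_externalCoveringNumber ε (⋃ c ∈ C', closedEBall c ε)
  have hexchange : IsCover ε K (C \ C' ∪ T) := by
    intro x hx
    obtain ⟨c, hc, hxc⟩ := hC hx
    by_cases hc' : c ∈ C'
    · exact hT.mono Set.subset_union_right (Set.mem_biUnion hc' hxc)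
    · exact ⟨c, .inl ⟨hc, hc'⟩, hxc⟩
  have hle : (C \ C').encard + C'.encard ≤ (C \ C').encard + T.encard :=
    calc (C \ C').encard + C'.encard
      _ = C.encard := Set.encard_sdiff_add_encard_of_subset hsub
      _ ≤ (C \ C' ∪ T).encard := hmin.trans_le hexchange.externalCoveringNumber_le_encard
      _ ≤ (C \ C').encard + T.encard := Set.encard_union_le _ _
  rw [← hTcard]
  exact (ENat.add_le_add_iff_left hfin.sdiff.encard_lt_top.ne).1 hle

/-- The part `C_∂` of a family `C` of centers that is seen by `S`: those `c ∈ C` whose closed ball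
of radius `ε` meets `S`. -/
def boundaryCenters (ε : ℝ≥0) (C S : Set X) : Set X :=
  {c ∈ C | (closedEBall c ε ∩ S).Nonempty}

theorem boundaryCenters_subset : boundaryCenters ε C S ⊆ C :=
  Set.sep_subset _ _

theorem isCover_boundaryCenters (hC : IsCover ε S C) : IsCover ε S (boundaryCenters ε C S) := by
  intro x hx
  obtain ⟨c, hc, hxc⟩ := hC hx
  exact ⟨c, ⟨hc, x, hxc, hx⟩, hxc⟩

theorem isCover_biUnion_closedEBall_boundaryCenters :
    IsCover (ε + ε) (⋃ c ∈ boundaryCenters ε C S, closedEBall c ε) S := by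
  refine isCover_add_of_isCover_of_isCover
    (isCover_iff_subset_iUnion_closedEBall.2 subset_rfl) ?_
  rintro c ⟨-, y, hyc, hy⟩
  exact ⟨y, hy, mem_closedEBall'.1 hyc⟩

theorem encard_boundaryCenters_le
    (hM : ∀ x : X, externalCoveringNumber ε (closedEBall x ↑(3 * ε)) ≤ M)
    (hC : IsCover ε K C) (hmin : C.encard = externalCoveringNumber ε K) (hfin : C.Finite) :
    (boundaryCenters ε C S).encard ≤ M * externalCoveringNumber ε S := by
  set U : Set X := ⋃ c ∈ boundaryCenters ε C S, closedEBall c ε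
  have hradius : 3 * ε = ε + ε + ε := by ring
  calc (boundaryCenters ε C S).encard
    _ ≤ externalCoveringNumber ε U :=
      encard_le_externalCoveringNumber_biUnion_closedEBall hC hmin hfin boundaryCenters_subset
    _ ≤ M * externalCoveringNumber (3 * ε) U :=
      externalCoveringNumber_le_mul_of_closedEBall_le hM
    _ ≤ M * externalCoveringNumber ε S := by
      rw [hradius]
      gcongr
      exact externalCoveringNumber_add_le_of_isCover isCover_biUnion_closedEBall_boundaryCenters

end PseudoEMetricSpace

theorem externalCoveringNumber_pi_le_prod {ι : Type*} [Fintype ι] {X : ι → Type*}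
    [∀ i, PseudoEMetricSpace (X i)] (ε : ℝ≥0) (A : ∀ i, Set (X i)) :
    externalCoveringNumber ε (Set.univ.pi A) ≤ ∏ i, externalCoveringNumber ε (A i) := by
  choose T hT hTcard using fun i ↦ exists_isCover_encard_eq_externalCoveringNumber ε (A i)
  have hcover : IsCover ε (Set.univ.pi A) (Set.univ.pi T) := by
    intro x hx
    choose t ht hxt using fun i ↦ hT i (hx i trivial)
    exact ⟨t, fun i _ ↦ ht i, edist_pi_le_iff.2 hxt⟩
  calc externalCoveringNumber ε (Set.univ.pi A)
    _ ≤ (Set.univ.pi T).encard := hcover.externalCoveringNumber_le_encard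
    _ = ∏ i, externalCoveringNumber ε (A i) := by
      simp only [Set.encard_pi_eq_prod_encard, hTcard]

theorem externalCoveringNumber_Icc_le (ε : ℝ≥0) (a : ℝ) (n : ℕ) :
    externalCoveringNumber ε (Set.Icc a (a + 2 * (n + 1) * ε)) ≤ n + 1 := by
  have hball (b : ℝ) : externalCoveringNumber ε (Set.Icc b (b + 2 * ε)) ≤ 1 := by
    have hcover : IsCover ε (Set.Icc b (b + 2 * ε)) {b + ε} :=
      .of_subset_iUnion_closedBall <| by
        rw [Set.biUnion_singleton, Real.closedBall_eq_Icc]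
        exact Set.Icc_subset_Icc (by linarith) (by linarith)
    simpa using hcover.externalCoveringNumber_le_encard
  induction n with
  | zero => simpa using hball a
  | succ n ih =>
    set b : ℝ := a + 2 * (n + 1) * ε with hb
    have hend : a + 2 * ((n + 1 : ℕ) + 1) * ε = b + 2 * ε := by push_cast [hb]; ring
    calc externalCoveringNumber ε (Set.Icc a (a + 2 * ((n + 1 : ℕ) + 1) * ε))
      _ ≤ externalCoveringNumber ε (Set.Icc a b ∪ Set.Icc b (b + 2 * ε)) := by
        rw [hend]
        exact externalCoveringNumber_mono_set Set.Icc_subset_Icc_union_Icc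
      _ ≤ externalCoveringNumber ε (Set.Icc a b) +
          externalCoveringNumber ε (Set.Icc b (b + 2 * ε)) :=
        externalCoveringNumber_union_le _ _ _
      _ ≤ (n + 1 : ℕ) + 1 := by
        push_cast
        exact add_le_add ih (hball b)

theorem externalCoveringNumber_closedEBall_pi_le {ι : Type*} [Fintype ι] (ε : ℝ≥0)
    (x : ι → ℝ) (n : ℕ) :
    externalCoveringNumber ε (closedEBall x ↑((n + 1) * ε)) ≤ (n + 1) ^ Fintype.card ι := by
  have hside (i : ι) : closedBall (x i) ↑((n + 1) * ε) =
      Set.Icc (x i - (n + 1) * ε) (x i - (n + 1) * ε + 2 * (n + 1) * ε) := by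
    rw [Real.closedBall_eq_Icc]
    push_cast
    ring_nf
  calc externalCoveringNumber ε (closedEBall x ↑((n + 1) * ε))
    _ = externalCoveringNumber ε (Set.univ.pi fun i ↦ closedBall (x i) ↑((n + 1) * ε)) := by
      rw [closedEBall_coe, closedBall_pi x (NNReal.coe_nonneg _)]
    _ ≤ ∏ i, externalCoveringNumber ε (closedBall (x i) ↑((n + 1) * ε)) :=
      externalCoveringNumber_pi_le_prod _ _
    _ ≤ ∏ _i : ι, ((n : ℕ∞) + 1) :=
      Finset.prod_le_prod' fun i _ ↦ hside i ▸ externalCoveringNumber_Icc_le ε _ n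
    _ = (n + 1) ^ Fintype.card ι := by rw [Finset.prod_const, Finset.card_univ]

theorem externalCoveringNumber_ne_top_of_isBounded {X : Type*} [PseudoMetricSpace X]
    [ProperSpace X] {ε : ℝ≥0} (hε : ε ≠ 0) {A : Set X} (hA : Bornology.IsBounded A) :
    externalCoveringNumber ε A ≠ ⊤ := by
  obtain ⟨T, -, hT, hcover⟩ :=
    exists_finite_isCover_of_isCompact_closure hε hA.isCompact_closure
  exact (hcover.externalCoveringNumber_le_encard.trans_lt hT.encard_lt_top).ne

theorem isCover_iff_subset_iUnion_norm_sub_le {E : Type*} [SeminormedAddCommGroup E] {ε : ℝ≥0}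
    {A T : Set E} : IsCover ε A T ↔ A ⊆ ⋃ t ∈ T, {x | ‖x - t‖ ≤ ε} := by
  simp only [isCover_iff_subset_iUnion_closedBall, closedBall, dist_eq_norm]

theorem boundaryCenters_eq_setOf_norm_sub_le {E : Type*} [SeminormedAddCommGroup E] (ε : ℝ≥0)
    (C S : Set E) : boundaryCenters ε C S = {c ∈ C | ({x | ‖x - c‖ ≤ ε} ∩ S).Nonempty} := by
  simp only [boundaryCenters, closedEBall_coe, closedBall, dist_eq_norm]

theorem coe_coveringNumber {D : ℕ} {ε : ℝ≥0} {U : Set (Fin D → ℝ)}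
    (hU : externalCoveringNumber ε U ≠ ⊤) :
    (coveringNumber D ε U : ℕ∞) = externalCoveringNumber ε U := by
  obtain ⟨T, hT, hTcard⟩ := exists_isCover_encard_eq_externalCoveringNumber ε U
  lift T to Finset (Fin D → ℝ) using Set.encard_ne_top_iff.1 (hTcard ▸ hU)
  have hTmem := isCover_iff_subset_iUnion_norm_sub_le.1 hT
  refine le_antisymm ?_ ?_
  · rw [← hTcard, Set.encard_coe_eq_coe_finsetCard, Nat.cast_le]
    exact Nat.sInf_le ⟨T, rfl, hTmem⟩
  · obtain ⟨T', hT'card, hT'⟩ : coveringNumber D ε U ∈ _ :=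
      Nat.sInf_mem ⟨T.card, T, rfl, hTmem⟩
    rw [← hT'card, ← Set.encard_coe_eq_coe_finsetCard]
    exact (isCover_iff_subset_iUnion_norm_sub_le.2 hT').externalCoveringNumber_le_encard

theorem coveringNumber_anti_of_isBounded {D : ℕ} {r s : ℝ} {U : Set (Fin D → ℝ)} (hr : 0 < r)
    (hrs : r ≤ s) (hU : Bornology.IsBounded U) : coveringNumber D s U ≤ coveringNumber D r U := by
  have hs : 0 < s := hr.trans_le hrs
  lift r to ℝ≥0 using hr.le
  lift s to ℝ≥0 using hs.le
  rw [NNReal.coe_pos, pos_iff_ne_zero] at hr hs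
  rw [← Nat.cast_le (α := ℕ∞),
    coe_coveringNumber (externalCoveringNumber_ne_top_of_isBounded hs hU),
    coe_coveringNumber (externalCoveringNumber_ne_top_of_isBounded hr hU)]
  exact externalCoveringNumber_anti hrs

theorem boundary_cubes_card_bound_general {D : ℕ} {γ : ℝ} (hγ : 0 ≤ γ) {K S : Set (Fin D → ℝ)}
    (hSK : S ⊆ K) {C : Finset (Fin D → ℝ)} (hCcov : K ⊆ ⋃ c ∈ C, {x | ‖x - c‖ ≤ γ})
    (hCmin : C.card = coveringNumber D γ K) :
    coveringNumber D γ S ≤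
        {c ∈ (C : Set (Fin D → ℝ)) | ({x | ‖x - c‖ ≤ γ} ∩ S).Nonempty}.ncard ∧
      {c ∈ (C : Set (Fin D → ℝ)) | ({x | ‖x - c‖ ≤ γ} ∩ S).Nonempty}.ncard ≤
        3 ^ D * coveringNumber D γ S := by
  lift γ to ℝ≥0 using hγ
  have hC : IsCover γ K C := isCover_iff_subset_iUnion_norm_sub_le.2 hCcov
  have hfinite {A T : Set (Fin D → ℝ)} (hT : IsCover γ A T) (hTC : T ⊆ C) :
      externalCoveringNumber γ A ≠ ⊤ :=
    (hT.externalCoveringNumber_le_encard.trans_lt (C.finite_toSet.subset hTC).encard_lt_top).ne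
  have hmin : (C : Set (Fin D → ℝ)).encard = externalCoveringNumber γ K := by
    rw [Set.encard_coe_eq_coe_finsetCard, hCmin, coe_coveringNumber (hfinite hC subset_rfl)]
  have hball (x : Fin D → ℝ) : externalCoveringNumber γ (closedEBall x ↑(3 * γ)) ≤ 3 ^ D := by
    simpa [two_add_one_eq_three] using externalCoveringNumber_closedEBall_pi_le γ x 2
  have hcoverS := isCover_boundaryCenters (hC.anti hSK)
  have hcard : ((boundaryCenters γ (C : Set (Fin D → ℝ)) S).ncard : ℕ∞) =
      (boundaryCenters γ (C : Set (Fin D → ℝ)) S).encard :=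
    (C.finite_toSet.subset boundaryCenters_subset).cast_ncard_eq
  rw [← boundaryCenters_eq_setOf_norm_sub_le, ← Nat.cast_le (α := ℕ∞), ← Nat.cast_le (α := ℕ∞),
    Nat.cast_mul, hcard, coe_coveringNumber (hfinite hcoverS boundaryCenters_subset)]
  exact ⟨hcoverS.externalCoveringNumber_le_encard,
    mod_cast encard_boundaryCenters_le hball hC hmin C.finite_toSet⟩

/-- If `C` is a minimal finite `γ`-cover of `[0,1]^D` in ℓ∞ and `C_∂` is the set of centers
`c ∈ C` whose closed ℓ∞-ball of radius `γ` meets the nonempty set `S ⊆ [0,1]^D`, then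
`N(γ, S) ≤ card C_∂ ≤ 2^D · 4^D · N(γ/2, S)`. -/
theorem boundary_cubes_card_bound
    (D : ℕ) (hD : 1 ≤ D) (γ : ℝ) (hγ : 0 < γ)
    (S : Set (Fin D → ℝ)) (hS : S.Nonempty) (hSsub : S ⊆ Set.Icc 0 1)
    (C : Finset (Fin D → ℝ))
    (hCcov : Set.Icc (0 : Fin D → ℝ) 1 ⊆ ⋃ c ∈ C, {x | ‖x - c‖ ≤ γ})
    (hCmin : C.card = coveringNumber D γ (Set.Icc 0 1))
    (Cb : Set (Fin D → ℝ))
    (hCb : Cb = {c ∈ (C : Set (Fin D → ℝ)) | ({x | ‖x - c‖ ≤ γ} ∩ S).Nonempty}) :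
    coveringNumber D γ S ≤ Cb.ncard ∧
      Cb.ncard ≤ 2 ^ D * 4 ^ D * coveringNumber D (γ / 2) S := by
  subst hCb
  have hconst : 3 ^ D ≤ 2 ^ D * 4 ^ D := mul_pow 2 4 D ▸ Nat.pow_le_pow_left (by norm_num) D
  have hanti : coveringNumber D γ S ≤ coveringNumber D (γ / 2) S :=
    coveringNumber_anti_of_isBounded (half_pos hγ) (half_le_self hγ.le)
      ((isBounded_Icc 0 1).subset hSsub)
  exact (boundary_cubes_card_bound_general hγ.le hSsub hCcov hCmin).imp_right
    fun hupper ↦ hupper.trans (Nat.mul_le_mul hconst hanti)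
end

section
/- Let D ≥ 1 be an integer, γ > 0, K > 0, and let S be a nonempty subset of [0,1]^D satisfying N(γ/2, S) ≤ K · γ^{-(D-1)}. Let C ⊆ ℝ^D be a finite γ-cover of [0,1]^D (in ℓ∞) of minimal cardinality, i.e. card(C) = N(γ, [0,1]^D), and let C_∂ = {c ∈ C : the closed ℓ∞-ball of radius γ around c intersects S}. Then the Lebesgue measure of ⋃_{c ∈ C_∂} {x : ‖x−c‖∞ ≤ γ} is at most 16^D · K · γ. -/
/-!
A ball of radius `γ` meeting `S` is centred within `3γ/2` of a centre of any `γ/2`-cover of `S`,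
hence lies in the ball of radius `5γ/2` around that centre. A minimal `γ/2`-cover of `S` has at
most `K / γ ^ (D - 1)` centres, and a sup-norm ball of radius `5γ/2` has volume `(5γ) ^ D`.
-/

open MeasureTheory
open Metric (closedBall)
open scoped NNReal

theorem closedBall_eq_setOf_norm_sub_le {E : Type*} [SeminormedAddCommGroup E] (c : E) (r : ℝ) :
    closedBall c r = {x | ‖x - c‖ ≤ r} :=
  Set.ext fun _ ↦ mem_closedBall_iff_norm

theorem biUnion_closedBall_subset_of_inter_nonempty {X : Type*} [PseudoMetricSpace X]
    {S T C : Set X} {r δ : ℝ} (hT : S ⊆ ⋃ t ∈ T, closedBall t δ)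
    (hC : ∀ c ∈ C, (closedBall c r ∩ S).Nonempty) :
    ⋃ c ∈ C, closedBall c r ⊆ ⋃ t ∈ T, closedBall t (2 * r + δ) := by
  refine Set.iUnion₂_subset fun c hc ↦ ?_
  obtain ⟨s, hsc, hsS⟩ := hC c hc
  obtain ⟨t, htT, hst⟩ := Set.mem_iUnion₂.1 (hT hsS)
  have hct : dist c t ≤ r + δ :=
    (dist_triangle_left c t s).trans
      (add_le_add (Metric.mem_closedBall.1 hsc) (Metric.mem_closedBall.1 hst))
  exact (Metric.closedBall_subset_closedBall' (by linarith)).trans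
    (Set.subset_biUnion_of_mem (u := fun t ↦ closedBall t (2 * r + δ)) htT)

theorem volume_pi_biUnion_closedBall_le {ι : Type*} [Fintype ι] (T : Finset (ι → ℝ)) {r : ℝ}
    (hr : 0 ≤ r) :
    volume (⋃ t ∈ T, closedBall t r) ≤ ENNReal.ofReal (T.card * (2 * r) ^ Fintype.card ι) :=
  calc volume (⋃ t ∈ T, closedBall t r)
      ≤ ∑ t ∈ T, volume (closedBall t r) := measure_biUnion_finset_le T _
    _ = ENNReal.ofReal (T.card * (2 * r) ^ Fintype.card ι) := by
      simp [Real.volume_pi_closedBall _ hr, ENNReal.ofReal_mul]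

theorem exists_finset_card_eq_coveringNumber {D : ℕ} {r : ℝ} (hr : 0 < r) {U : Set (Fin D → ℝ)}
    (hU : Bornology.IsBounded U) :
    ∃ T : Finset (Fin D → ℝ), T.card = coveringNumber D r U ∧ U ⊆ ⋃ t ∈ T, closedBall t r := by
  simp only [closedBall_eq_setOf_norm_sub_le]
  refine Nat.sInf_mem
    (s := {n | ∃ T : Finset (Fin D → ℝ), T.card = n ∧ U ⊆ ⋃ t ∈ T, {x | ‖x - t‖ ≤ r}}) ?_
  lift r to ℝ≥0 using hr.le
  obtain ⟨N, -, hN, hUN⟩ :=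
    Metric.exists_finite_isCover_of_isCompact_closure (NNReal.coe_pos.1 hr).ne' hU.isCompact_closure
  refine ⟨_, hN.toFinset, rfl, ?_⟩
  simpa [closedBall_eq_setOf_norm_sub_le] using
    Metric.isCover_iff_subset_iUnion_closedBall.1 hUN

theorem volume_biUnion_closedBall_le_coveringNumber_mul {D : ℕ} {r δ : ℝ} (hr : 0 ≤ r)
    (hδ : 0 < δ) {S C : Set (Fin D → ℝ)} (hS : Bornology.IsBounded S)
    (hC : ∀ c ∈ C, (closedBall c r ∩ S).Nonempty) :
    volume (⋃ c ∈ C, closedBall c r) ≤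
      ENNReal.ofReal (coveringNumber D δ S * (2 * (2 * r + δ)) ^ D) := by
  obtain ⟨T, hTcard, hST⟩ := exists_finset_card_eq_coveringNumber hδ hS
  calc volume (⋃ c ∈ C, closedBall c r)
      ≤ volume (⋃ t ∈ T, closedBall t (2 * r + δ)) :=
        measure_mono (biUnion_closedBall_subset_of_inter_nonempty (T := T) hST hC)
    _ ≤ ENNReal.ofReal (coveringNumber D δ S * (2 * (2 * r + δ)) ^ D) := by
      simpa [hTcard] using volume_pi_biUnion_closedBall_le T (by positivity : 0 ≤ 2 * r + δ)

theorem boundary_cubes_volume_bound_general {D : ℕ} (hD : 1 ≤ D) {γ K : ℝ} (hγ : 0 < γ)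
    {S C : Set (Fin D → ℝ)} (hS : Bornology.IsBounded S)
    (hcov : (coveringNumber D (γ / 2) S : ℝ) ≤ K / γ ^ (D - 1))
    (hC : ∀ c ∈ C, ({x | ‖x - c‖ ≤ γ} ∩ S).Nonempty) :
    volume (⋃ c ∈ C, {x | ‖x - c‖ ≤ γ}) ≤ ENNReal.ofReal (5 ^ D * K * γ) := by
  simp only [← closedBall_eq_setOf_norm_sub_le] at hC ⊢
  refine (volume_biUnion_closedBall_le_coveringNumber_mul hγ.le (half_pos hγ) hS hC).trans
    (ENNReal.ofReal_le_ofReal ?_)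
  calc (coveringNumber D (γ / 2) S : ℝ) * (2 * (2 * γ + γ / 2)) ^ D
      = coveringNumber D (γ / 2) S * (5 * γ) ^ D := by ring
    _ ≤ K / γ ^ (D - 1) * (5 * γ) ^ D := by gcongr
    _ = 5 ^ D * K * γ := by
      rw [mul_pow, ← pow_sub_one_mul (Nat.one_le_iff_ne_zero.1 hD) γ]
      field_simp

/-- If `S ⊆ [0,1]^D` is nonempty with `N(γ/2, S) ≤ K · γ^{-(D-1)}`, `C` is a minimal finite
`γ`-cover of `[0,1]^D` in ℓ∞, and `C_∂` is the set of centers `c ∈ C` whose closed ℓ∞-ball of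
radius `γ` meets `S`, then the Lebesgue measure of the union of those balls is at most
`16^D · K · γ`. -/
theorem boundary_cubes_volume_bound
    (D : ℕ) (hD : 1 ≤ D) (γ K : ℝ) (hγ : 0 < γ) (hK : 0 < K)
    (S : Set (Fin D → ℝ)) (hS : S.Nonempty) (hSsub : S ⊆ Set.Icc 0 1)
    (hcov : (coveringNumber D (γ / 2) S : ℝ) ≤ K / γ ^ (D - 1))
    (C : Finset (Fin D → ℝ))
    (hCcov : Set.Icc (0 : Fin D → ℝ) 1 ⊆ ⋃ c ∈ C, {x | ‖x - c‖ ≤ γ})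
    (hCmin : C.card = coveringNumber D γ (Set.Icc 0 1))
    (Cb : Set (Fin D → ℝ))
    (hCb : Cb = {c ∈ (C : Set (Fin D → ℝ)) | ({x | ‖x - c‖ ≤ γ} ∩ S).Nonempty}) :
    MeasureTheory.volume (⋃ c ∈ Cb, {x | ‖x - c‖ ≤ γ}) ≤
      ENNReal.ofReal (16 ^ D * K * γ) := by
  have hmeet : ∀ c ∈ Cb, ({x | ‖x - c‖ ≤ γ} ∩ S).Nonempty := fun c hc ↦ (hCb ▸ hc).2
  exact (boundary_cubes_volume_bound_general hD hγ ((Metric.isBounded_Icc 0 1).subset hSsub)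
    hcov hmeet).trans (ENNReal.ofReal_le_ofReal (by gcongr; norm_num))
end

section
/- Let D ≥ 1, β, x ∈ ℝ^D, y ∈ ℝ, and δ ≥ 0. Then sup_{λ ∈ ℝ^D, ‖λ‖∞ ≤ δ} (y − β·(x+λ))² = (|y − β·x| + δ‖β‖₁)². -/
open Set
open scoped Matrix

/-!
The perturbation enters the residual only through `t = β·λ`. By Hölder's inequality and by
moving along the sign vector of `β`, `t` ranges over exactly the interval `[-δ‖β‖₁, δ‖β‖₁]`, and on
a symmetric interval `(r - t)²` is largest at the endpoint whose sign is opposite to that of `r`.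
-/

theorem isGreatest_sq_sub_image_Icc {R : Type*} [CommRing R] [LinearOrder R]
    [IsStrictOrderedRing R] (r : R) {c : R} (hc : 0 ≤ c) :
    IsGreatest ((fun t => (r - t) ^ 2) '' Icc (-c) c) ((|r| + c) ^ 2) := by
  constructor
  · rcases le_total 0 r with hr | hr
    · exact ⟨-c, left_mem_Icc.2 (neg_le_self hc), by simp only [abs_of_nonneg hr, sub_neg_eq_add]⟩
    · exact ⟨c, right_mem_Icc.2 (neg_le_self hc), by simp only [abs_of_nonpos hr]; ring⟩
  · rintro _ ⟨t, ht, rfl⟩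
    have hresidual : |r - t| ≤ |r| + c := (abs_sub r t).trans (by gcongr; exact abs_le.2 ht)
    exact sq_le_sq.2 (hresidual.trans (le_abs_self _))

variable {ι : Type*} [Fintype ι]

theorem norm_dotProduct_le_pi_norm_mul_sum_norm {R : Type*} [NonUnitalSeminormedRing R]
    (v w : ι → R) : ‖v ⬝ᵥ w‖ ≤ ‖w‖ * ∑ i, ‖v i‖ := by
  calc ‖v ⬝ᵥ w‖ ≤ ∑ i, ‖v i * w i‖ := norm_sum_le _ _
    _ ≤ ∑ i, ‖w‖ * ‖v i‖ := by
      gcongr with i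
      rw [mul_comm ‖w‖]
      exact (norm_mul_le _ _).trans (by gcongr; exact norm_le_pi_norm w i)
    _ = ‖w‖ * ∑ i, ‖v i‖ := (Finset.mul_sum ..).symm

theorem dotProduct_sign_eq_sum_abs {R : Type*} [Ring R] [LinearOrder R] [IsStrictOrderedRing R]
    (v : ι → R) : (v ⬝ᵥ fun i => (SignType.sign (v i) : R)) = ∑ i, |v i| :=
  Finset.sum_congr rfl fun i _ => self_mul_sign (v i)

theorem pi_norm_sign_le_one (v : ι → ℝ) : ‖fun i => (SignType.sign (v i) : ℝ)‖ ≤ 1 := by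
  refine (pi_norm_le_iff_of_nonneg zero_le_one).2 fun i => ?_
  cases SignType.sign (v i) <;> simp

theorem image_dotProduct_pi_norm_le (v : ι → ℝ) {δ : ℝ} (hδ : 0 ≤ δ) :
    (v ⬝ᵥ ·) '' {w | ‖w‖ ≤ δ} = Icc (-(δ * ∑ i, |v i|)) (δ * ∑ i, |v i|) := by
  have hsum : 0 ≤ ∑ i, |v i| := by positivity
  refine Subset.antisymm ?_ fun t ht => ?_
  · rintro _ ⟨w, hw, rfl⟩
    exact abs_le.1 ((norm_dotProduct_le_pi_norm_mul_sum_norm v w).trans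
      (mul_le_mul_of_nonneg_right hw hsum))
  · have ht_abs : |t| ≤ δ * ∑ i, |v i| := abs_le.2 ht
    -- If `v = 0`, then `t = 0` and the scaling factor is `0 / 0 = 0`.
    refine ⟨(t / ∑ i, |v i|) • fun i => (SignType.sign (v i) : ℝ), ?_, ?_⟩
    · have hscale : ‖t / ∑ i, |v i|‖ ≤ δ := by
        rw [Real.norm_eq_abs, abs_div, abs_of_nonneg hsum]
        exact div_le_of_le_mul₀ hsum hδ ht_abs
      exact (norm_smul_le _ _).trans
        ((mul_le_of_le_one_right (norm_nonneg _) (pi_norm_sign_le_one v)).trans hscale)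
    · have ht_zero (h : ∑ i, |v i| = 0) : t = 0 := by simpa [h] using ht_abs
      change v ⬝ᵥ _ = t
      rw [dotProduct_smul, dotProduct_sign_eq_sum_abs, smul_eq_mul, div_mul_cancel_of_imp ht_zero]

theorem linreg_best_pointwise_attack_multivariate_general
    (β x : ι → ℝ) (y : ℝ) {δ : ℝ} (hδ : 0 ≤ δ) :
    IsGreatest ((fun l => (y - β ⬝ᵥ (x + l)) ^ 2) '' {l | ‖l‖ ≤ δ})
      ((|y - β ⬝ᵥ x| + δ * ∑ i, |β i|) ^ 2) := by
  have hradius : 0 ≤ δ * ∑ i, |β i| := by positivity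
  have hgreatest := isGreatest_sq_sub_image_Icc (y - β ⬝ᵥ x) hradius
  rw [← image_dotProduct_pi_norm_le β hδ, image_image] at hgreatest
  simpa only [dotProduct_add, sub_sub] using hgreatest

/-- For the multivariate linear-regression squared loss, the supremum of `(y - β·(x+λ))²`
over the ℓ∞ ball `‖λ‖∞ ≤ δ` equals `(|y - β·x| + δ‖β‖₁)²`.
Here `Fin D → ℝ` carries the sup (ℓ∞) norm and `∑ i, |β i|` is the ℓ1 norm of `β`. -/
theorem linreg_best_pointwise_attack_multivariate
    (D : ℕ) (hD : 1 ≤ D) (β x : Fin D → ℝ) (y δ : ℝ) (hδ : 0 ≤ δ) :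
    sSup ((fun l : Fin D → ℝ => (y - ∑ i, β i * (x i + l i)) ^ 2) '' {l | ‖l‖ ≤ δ})
      = (|y - ∑ i, β i * x i| + δ * ∑ i, |β i|) ^ 2 := by
  exact (linreg_best_pointwise_attack_multivariate_general β x y hδ).csSup_eq
end

section
/- Let D ≥ 1, β, x ∈ ℝ^D, y ∈ ℝ, δ ≥ 0, and assume β·x ≠ y. Define λ* ∈ ℝ^D componentwise by λ*_i = δ · sign(β·x − y) · sign(β_i); equivalently, λ* equals δ times the componentwise sign of the gradient ∇_x (y − β·x)² = 2(β·x − y)β. Then ‖λ*‖∞ ≤ δ and (y − β·(x+λ*))² = (|y − β·x| + δ‖β‖₁)² = sup_{‖λ‖∞ ≤ δ} (y − β·(x+λ))²; that is, the FGSM perturbation δ·sign(∇_x L) is an exact maximizer of the squared loss over the ℓ∞ ball of radius δ. -/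
/-!
Moving the input by `l` changes the signed residual `r = β·x - y` by `β·l`, and `|β·l| ≤ δ‖β‖₁` on
the `ℓ∞` ball of radius `δ`. The FGSM step `δ · sign (r β)` turns this into an equality in which
`β·l` has the sign of `r`, so the triangle inequality for `|r + β·l|` is sharp as well. It therefore
maximizes the absolute residual, and with it every loss that is nondecreasing in the absolute
residual.
-/

open Set
open scoped Matrix

theorem real_sign_eq_coe_sign (a : ℝ) : Real.sign a = (SignType.sign a : ℝ) := by
  obtain ha | rfl | ha := lt_trichotomy a 0
  · simp [Real.sign_of_neg ha, ha]
  · simp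
  · simp [Real.sign_of_pos ha, ha]

section OrderedRing

variable {α : Type*} [Ring α] [LinearOrder α] [IsStrictOrderedRing α]

theorem abs_coe_signType_le_one (s : SignType) : |(s : α)| ≤ 1 := by
  cases s <;> simp

theorem abs_add_sign_mul {r t : α} (hr : r ≠ 0) (ht : 0 ≤ t) :
    |r + SignType.sign r * t| = |r| + t := by
  obtain hr | hr := hr.lt_or_gt
  · rw [sign_neg hr, abs_of_neg hr, SignType.coe_neg_one, neg_one_mul,
      abs_of_nonpos (add_nonpos hr.le (neg_nonpos.mpr ht)), neg_add, neg_neg]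
  · rw [sign_pos hr, abs_of_pos hr, SignType.coe_one, one_mul, abs_of_nonneg (add_nonneg hr.le ht)]

end OrderedRing

theorem norm_dotProduct_le_sum_norm_mul_norm {ι R : Type*} [Fintype ι] [NonUnitalSeminormedRing R]
    (v w : ι → R) : ‖v ⬝ᵥ w‖ ≤ (∑ i, ‖v i‖) * ‖w‖ :=
  calc ‖v ⬝ᵥ w‖ ≤ ∑ i, ‖v i‖ * ‖w i‖ := norm_sum_le_of_le _ fun i _ => norm_mul_le (v i) (w i)
    _ ≤ ∑ i, ‖v i‖ * ‖w‖ := by gcongr with i; exact norm_le_pi_norm w i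
    _ = (∑ i, ‖v i‖) * ‖w‖ := (Finset.sum_mul ..).symm

/-- The fast gradient sign method (FGSM) step of size `δ` for a loss with gradient `g`. Only the
signs of the entries of `g` matter, so `g` may be any positive multiple of the gradient. -/
noncomputable def fgsmStep {ι : Type*} (δ : ℝ) (g : ι → ℝ) : ι → ℝ :=
  fun i => δ * SignType.sign (g i)

namespace fgsmStep

theorem smul_right {ι : Type*} (δ c : ℝ) (g : ι → ℝ) :
    fgsmStep δ (c • g) = (SignType.sign c : ℝ) • fgsmStep δ g := by
  ext i
  simp [fgsmStep, sign_mul, mul_left_comm]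

variable {ι : Type*} [Fintype ι]

theorem norm_le {δ : ℝ} (hδ : 0 ≤ δ) (g : ι → ℝ) : ‖fgsmStep δ g‖ ≤ δ := by
  refine (pi_norm_le_iff_of_nonneg hδ).mpr fun i => ?_
  rw [fgsmStep, Real.norm_eq_abs, abs_mul, abs_of_nonneg hδ]
  exact mul_le_of_le_one_right hδ (abs_coe_signType_le_one _)

theorem dotProduct_self (δ : ℝ) (g : ι → ℝ) : g ⬝ᵥ fgsmStep δ g = δ * ∑ i, |g i| := by
  simp only [dotProduct, fgsmStep, mul_left_comm _ δ, self_mul_sign, Finset.mul_sum]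

theorem abs_add_dotProduct {δ r : ℝ} (hδ : 0 ≤ δ) (hr : r ≠ 0) (β : ι → ℝ) :
    |r + β ⬝ᵥ fgsmStep δ (r • β)| = |r| + δ * ∑ i, |β i| := by
  rw [smul_right, dotProduct_smul, dotProduct_self, smul_eq_mul,
    abs_add_sign_mul hr (mul_nonneg hδ (Finset.sum_nonneg fun i _ => abs_nonneg (β i)))]

end fgsmStep

theorem abs_add_dotProduct_le_of_norm_le {ι : Type*} [Fintype ι] {δ : ℝ} (r : ℝ) (β : ι → ℝ)
    {l : ι → ℝ} (hl : ‖l‖ ≤ δ) : |r + β ⬝ᵥ l| ≤ |r| + δ * ∑ i, |β i| :=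
  calc |r + β ⬝ᵥ l| ≤ |r| + |β ⬝ᵥ l| := abs_add_le _ _
    _ ≤ |r| + (∑ i, |β i|) * ‖l‖ := by gcongr; exact norm_dotProduct_le_sum_norm_mul_norm β l
    _ ≤ |r| + (∑ i, |β i|) * δ := by gcongr
    _ = |r| + δ * ∑ i, |β i| := by rw [mul_comm δ]

theorem abs_sub_dotProduct_add {ι : Type*} [Fintype ι] (β x l : ι → ℝ) (y : ℝ) :
    |y - β ⬝ᵥ (x + l)| = |(β ⬝ᵥ x - y) + β ⬝ᵥ l| := by
  rw [abs_sub_comm, dotProduct_add, add_sub_right_comm]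

theorem fgsm_exact_linreg_general {ι : Type*} [Fintype ι] {φ : ℝ → ℝ} (hφ : MonotoneOn φ (Ici 0))
    (β x : ι → ℝ) {y δ : ℝ} (hδ : 0 ≤ δ) (hne : β ⬝ᵥ x ≠ y) {lstar : ι → ℝ}
    (hl : lstar = fgsmStep δ ((β ⬝ᵥ x - y) • β)) :
    ‖lstar‖ ≤ δ ∧
    φ |y - β ⬝ᵥ (x + lstar)| = φ (|y - β ⬝ᵥ x| + δ * ∑ i, |β i|) ∧
    IsGreatest ((fun l => φ |y - β ⬝ᵥ (x + l)|) '' {l | ‖l‖ ≤ δ}) (φ |y - β ⬝ᵥ (x + lstar)|) := by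
  have hnorm : ‖lstar‖ ≤ δ := hl ▸ fgsmStep.norm_le hδ _
  have hvalue : |y - β ⬝ᵥ (x + lstar)| = |y - β ⬝ᵥ x| + δ * ∑ i, |β i| := by
    rw [abs_sub_dotProduct_add, hl, fgsmStep.abs_add_dotProduct hδ (sub_ne_zero.mpr hne),
      abs_sub_comm]
  refine ⟨hnorm, congrArg φ hvalue, mem_image_of_mem _ hnorm, forall_mem_image.mpr fun l hlδ => ?_⟩
  refine hφ (mem_Ici.mpr (abs_nonneg _)) (mem_Ici.mpr (abs_nonneg _)) ?_
  rw [hvalue, abs_sub_dotProduct_add, abs_sub_comm y]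
  exact abs_add_dotProduct_le_of_norm_le _ β hlδ

/-- FGSM is exact for multivariate linear regression: if `β·x ≠ y`, the perturbation
`λ*_i = δ · sign(β·x - y) · sign(β_i)` (which equals `δ` times the componentwise sign of the
gradient `∇_x (y - β·x)² = 2(β·x - y)β`) lies in the ℓ∞ ball of radius `δ` and attains the
supremum `(|y - β·x| + δ‖β‖₁)²` of the squared loss over that ball.
Here `Fin D → ℝ` carries the sup (ℓ∞) norm. -/
theorem fgsm_exact_linreg
    (D : ℕ) (hD : 1 ≤ D) (β x : Fin D → ℝ) (y δ : ℝ) (hδ : 0 ≤ δ)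
    (hne : (∑ i, β i * x i) ≠ y)
    (lstar : Fin D → ℝ)
    (hl : lstar = fun i => δ * Real.sign ((∑ j, β j * x j) - y) * Real.sign (β i)) :
    (∀ i, lstar i = δ * Real.sign (2 * ((∑ j, β j * x j) - y) * β i)) ∧
    ‖lstar‖ ≤ δ ∧
    (y - ∑ i, β i * (x i + lstar i)) ^ 2
      = (|y - ∑ i, β i * x i| + δ * ∑ i, |β i|) ^ 2 ∧
    (y - ∑ i, β i * (x i + lstar i)) ^ 2
      = sSup ((fun l : Fin D → ℝ => (y - ∑ i, β i * (x i + l i)) ^ 2) '' {l | ‖l‖ ≤ δ}) := by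
  have hstep : lstar = fgsmStep δ ((β ⬝ᵥ x - y) • β) := by
    ext i
    simp [hl, fgsmStep, dotProduct, real_sign_eq_coe_sign, sign_mul, mul_assoc]
  obtain ⟨hnorm, hloss, hmax⟩ :=
    fgsm_exact_linreg_general (pow_left_monotoneOn (n := 2)) β x hδ hne hstep
  simp only [sq_abs] at hloss hmax
  refine ⟨fun i => ?_, hnorm, hloss, hmax.csSup_eq.symm⟩
  simp [hl, real_sign_eq_coe_sign, sign_mul, mul_assoc]
end

section
/- Let D ≥ 1, β, x ∈ ℝ^D, y ∈ {0,1}, and δ ≥ 0. Define the logistic loss ℓ(u) = −y·log σ(β·u) − (1−y)·log(1 − σ(β·u)) for u ∈ ℝ^D, where σ(t) = 1/(1+e^{−t}). Then λ* ∈ ℝ^D defined componentwise by λ*_i = δ·(1−2y)·sign(β_i) satisfies ‖λ*‖∞ ≤ δ and ℓ(x + λ*) ≥ ℓ(x + λ) for every λ ∈ ℝ^D with ‖λ‖∞ ≤ δ; i.e. λ* maximizes the logistic loss over the ℓ∞ ball of radius δ. -/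
/-- The logistic sigmoid `σ(t) = 1/(1+e^{-t})`. -/
noncomputable def sigmoid (t : ℝ) : ℝ := 1 / (1 + Real.exp (-t))

/-! For a label `y ∈ {0, 1}` put `c = 1 - 2y ∈ {1, -1}`. The loss of a score `t` is
`log (1 + exp (c * t))`, an increasing function of `c * t`, so maximizing the loss amounts to
maximizing the linear form `l ↦ c * (β ⬝ᵥ l)` over the `ℓ∞` ball of radius `δ`. By `ℓ¹`-`ℓ∞`
duality its maximum is `δ * ∑ i, |β i|`, attained at `l = δ * c * sign β`. -/

section Duality

variable {ι : Type*} [Fintype ι]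

theorem mul_real_sign_self (b : ℝ) : b * Real.sign b = |b| := by
  rcases lt_trichotomy b 0 with hb | rfl | hb
  · rw [Real.sign_of_neg hb, abs_of_neg hb, mul_neg_one]
  · rw [zero_mul, abs_zero]
  · rw [Real.sign_of_pos hb, abs_of_pos hb, mul_one]

theorem abs_real_sign_le_one (b : ℝ) : |Real.sign b| ≤ 1 := by
  rcases Real.sign_apply_eq b with hb | hb | hb <;> norm_num [hb]

theorem norm_sign_comp_le_one (β : ι → ℝ) : ‖Real.sign ∘ β‖ ≤ 1 :=
  (pi_norm_le_iff_of_nonneg zero_le_one).2 fun i => abs_real_sign_le_one (β i)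

theorem dotProduct_sign_comp_self (β : ι → ℝ) : β ⬝ᵥ (Real.sign ∘ β) = ∑ i, |β i| :=
  Finset.sum_congr rfl fun i _ => mul_real_sign_self (β i)

theorem dotProduct_le_sum_abs_mul_norm (β l : ι → ℝ) : β ⬝ᵥ l ≤ (∑ i, |β i|) * ‖l‖ := by
  rw [dotProduct, Finset.sum_mul]
  refine Finset.sum_le_sum fun i _ => ?_
  calc β i * l i ≤ |β i| * |l i| := (le_abs_self _).trans_eq (abs_mul _ _)
    _ ≤ |β i| * ‖l‖ := mul_le_mul_of_nonneg_left (norm_le_pi_norm l i) (abs_nonneg _)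

theorem norm_smul_sign_comp_le (β : ι → ℝ) (a : ℝ) : ‖a • (Real.sign ∘ β)‖ ≤ |a| := by
  rw [norm_smul, Real.norm_eq_abs]
  exact mul_le_of_le_one_right (abs_nonneg a) (norm_sign_comp_le_one β)

theorem mul_dotProduct_le_mul_dotProduct_smul_sign (β : ι → ℝ) {l : ι → ℝ} {c δ : ℝ}
    (hc : |c| = 1) (hl : ‖l‖ ≤ δ) :
    c * (β ⬝ᵥ l) ≤ c * (β ⬝ᵥ ((δ * c) • (Real.sign ∘ β))) := by
  have hcc : c * c = 1 := by rw [← abs_mul_abs_self, hc, mul_one]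
  have hnorm : ‖c • l‖ ≤ δ := by rwa [norm_smul, Real.norm_eq_abs, hc, one_mul]
  calc c * (β ⬝ᵥ l) = β ⬝ᵥ (c • l) := by rw [dotProduct_smul, smul_eq_mul]
    _ ≤ (∑ i, |β i|) * ‖c • l‖ := dotProduct_le_sum_abs_mul_norm β (c • l)
    _ ≤ (∑ i, |β i|) * δ := by gcongr
    _ = c * c * ((∑ i, |β i|) * δ) := by rw [hcc, one_mul]
    _ = c * (β ⬝ᵥ ((δ * c) • (Real.sign ∘ β))) := by
      rw [dotProduct_smul, dotProduct_sign_comp_self, smul_eq_mul]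
      ring

end Duality

section LogisticLoss

/-- The softplus function `t ↦ log (1 + exp t)`: the logistic loss as a function of the score,
signed so that it increases towards misclassification. -/
noncomputable def softplus (t : ℝ) : ℝ := Real.log (1 + Real.exp t)

theorem softplus_monotone : Monotone softplus := fun s t hst => by
  unfold softplus
  gcongr

theorem neg_log_sigmoid (t : ℝ) : -Real.log (sigmoid t) = softplus (-t) := by
  rw [sigmoid, softplus, one_div, Real.log_inv, neg_neg]

theorem one_sub_sigmoid (t : ℝ) : 1 - sigmoid t = sigmoid (-t) := by
  simpa only [sigmoid, Real.sigmoid_def, one_div] using (Real.sigmoid_neg t).symm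

theorem neg_log_one_sub_sigmoid (t : ℝ) : -Real.log (1 - sigmoid t) = softplus t := by
  rw [one_sub_sigmoid, neg_log_sigmoid, neg_neg]

theorem logistic_loss_eq_softplus {y : ℝ} (hy : y = 0 ∨ y = 1) (t : ℝ) :
    -y * Real.log (sigmoid t) - (1 - y) * Real.log (1 - sigmoid t) =
      softplus ((1 - 2 * y) * t) := by
  rcases hy with rfl | rfl
  · calc _ = -Real.log (1 - sigmoid t) := by ring
      _ = softplus t := neg_log_one_sub_sigmoid t
      _ = _ := by ring_nf
  · calc _ = -Real.log (sigmoid t) := by ring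
      _ = softplus (-t) := neg_log_sigmoid t
      _ = _ := by ring_nf

end LogisticLoss

theorem logreg_best_pointwise_attack_multivariate_general {ι α : Type*} [Fintype ι] [Preorder α]
    {φ : ℝ → α} (hφ : Monotone φ) (β x : ι → ℝ) {c δ : ℝ} (hc : |c| = 1) (hδ : 0 ≤ δ) :
    ‖fun i => δ * c * Real.sign (β i)‖ ≤ δ ∧
    ∀ l : ι → ℝ, ‖l‖ ≤ δ →
      φ (c * ∑ i, β i * (x + l) i) ≤
        φ (c * ∑ i, β i * (x + fun i => δ * c * Real.sign (β i)) i) := by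
  refine ⟨?_, fun l hl => hφ ?_⟩
  · calc ‖fun i => δ * c * Real.sign (β i)‖ ≤ |δ * c| := norm_smul_sign_comp_le β (δ * c)
      _ = δ := by rw [abs_mul, hc, mul_one, abs_of_nonneg hδ]
  · change c * (β ⬝ᵥ (x + l)) ≤ c * (β ⬝ᵥ (x + (δ * c) • (Real.sign ∘ β)))
    rw [dotProduct_add, dotProduct_add, mul_add, mul_add]
    gcongr c * (β ⬝ᵥ x) + ?_
    exact mul_dotProduct_le_mul_dotProduct_smul_sign β hc hl

/-- For multivariate logistic regression with label `y ∈ {0,1}` and logistic loss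
`ℓ(u) = -y log σ(β·u) - (1-y) log(1-σ(β·u))`, the perturbation
`λ*_i = δ(1-2y) sign(β_i)` lies in the ℓ∞ ball of radius `δ` and maximizes `ℓ(x+λ)`
over all `λ` with `‖λ‖∞ ≤ δ`. Here `Fin D → ℝ` carries the sup (ℓ∞) norm. -/
theorem logreg_best_pointwise_attack_multivariate
    (D : ℕ) (hD : 1 ≤ D) (β x : Fin D → ℝ) (y δ : ℝ) (hy : y = 0 ∨ y = 1) (hδ : 0 ≤ δ)
    (ℓ : (Fin D → ℝ) → ℝ)
    (hℓ : ℓ = fun u => -y * Real.log (sigmoid (∑ i, β i * u i))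
        - (1 - y) * Real.log (1 - sigmoid (∑ i, β i * u i)))
    (lstar : Fin D → ℝ)
    (hl : lstar = fun i => δ * (1 - 2 * y) * Real.sign (β i)) :
    ‖lstar‖ ≤ δ ∧
    ∀ l : Fin D → ℝ, ‖l‖ ≤ δ → ℓ (x + l) ≤ ℓ (x + lstar) := by
  have hc : |1 - 2 * y| = 1 := by rcases hy with rfl | rfl <;> norm_num
  subst hℓ hl
  simpa only [logistic_loss_eq_softplus hy] using
    logreg_best_pointwise_attack_multivariate_general softplus_monotone β x hc hδ
end
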